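/- Let R₀ > 0, let 1 ≤ r < ∞, and let f : ℂ → ℂ be continuous on the region E = {ζ ∈ ℂ : |ζ| ≥ R₀} and satisfy ∫_E |f|^r dμ < ∞ (Lebesgue measure). Fix z ∈ ℂ. Then there exists a sequence of radii R₁ < R₂ < ⋯ with Rₙ → ∞ such that the circle integrals ∮_{|ζ|=Rₙ} f(ζ)/(ζ − z) dζ converge to 0 as n → ∞. -/

import Mathlib

open MeasureTheory Complex Filter

lemma aux_elem (r : ℝ) (hr : 1 ≤ r) (d : ℝ) (hd : 0 < d) (a : ℝ) (ha : 0 ≤ a) :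
    a ≤ d + d ^ (1 - r) * a ^ r := by
  have h0 : 0 ≤ d ^ (1 - r) := Real.rpow_nonneg hd.le _
  have h1 : 0 ≤ a ^ r := Real.rpow_nonneg ha _
  rcases le_or_gt a d with h | h
  · nlinarith [mul_nonneg h0 h1]
  · have hap : 0 < a := hd.trans h
    have h2 : a ^ (1 - r) ≤ d ^ (1 - r) :=
      Real.rpow_le_rpow_of_nonpos hd h.le (by linarith)
    have h3 : a = a ^ (1 - r) * a ^ r := by
      rw [← Real.rpow_add hap]; simp
    have := mul_le_mul_of_nonneg_right h2 h1
    linarith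

lemma aux_circle (R₀ : ℝ) (r : ℝ) (hr : 1 ≤ r)
    (f : ℂ → ℂ)
    (hcont : ContinuousOn f {ζ : ℂ | R₀ ≤ ‖ζ‖}) (z : ℂ) (x : ℝ) (hx0 : 0 < x)
    (hx : R₀ ≤ x) (hxz : 2 * ‖z‖ ≤ x) (d : ℝ) (hd : 0 < d) :
    ‖circleIntegral (fun ζ => f ζ / (ζ - z)) 0 x‖ ≤
      2 * (2 * Real.pi * d + d ^ (1 - r) *
        ∫ y in (-Real.pi)..Real.pi, ‖f (circleMap 0 x y)‖ ^ r) := by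
  have hn : ∀ y, ‖circleMap 0 x y‖ = x := by
    intro y; simp [abs_of_pos hx0]
  have hfc : Continuous (fun y => f (circleMap 0 x y)) :=
    hcont.comp_continuous (continuous_circleMap 0 x) (fun y => by simp [abs_of_pos hx0, hx])
  have hpc : Continuous (fun y => ‖f (circleMap 0 x y)‖ ^ r) :=
    hfc.norm.rpow_const (fun _ => Or.inr (by linarith))
  have hper : (∫ y in (0 : ℝ)..(2 * Real.pi), ‖f (circleMap 0 x y)‖ ^ r) =
      ∫ y in (-Real.pi)..Real.pi, ‖f (circleMap 0 x y)‖ ^ r := by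
    have hp : Function.Periodic (fun y => ‖f (circleMap 0 x y)‖ ^ r) (2 * Real.pi) := by
      intro y
      simp only [periodic_circleMap 0 x y]
    have := hp.intervalIntegral_add_eq 0 (-Real.pi)
    rw [zero_add, show -Real.pi + 2 * Real.pi = Real.pi by ring] at this
    exact this
  rw [← hper]
  have hb : ∀ y : ℝ, ‖deriv (circleMap 0 x) y • (f (circleMap 0 x y) / (circleMap 0 x y - z))‖
      ≤ 2 * (d + d ^ (1 - r) * ‖f (circleMap 0 x y)‖ ^ r) := by
    intro y
    have h1 := aux_elem r hr d hd _ (norm_nonneg (f (circleMap 0 x y)))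
    have h2 : x / 2 ≤ ‖circleMap 0 x y - z‖ := by
      have := norm_sub_norm_le (circleMap 0 x y) z
      rw [hn] at this
      linarith
    have h3 : ‖deriv (circleMap 0 x) y‖ = x := by
      simp [abs_of_pos hx0]
    rw [norm_smul, norm_div, h3]
    have h4 : x * (‖f (circleMap 0 x y)‖ / ‖circleMap 0 x y - z‖) ≤
        2 * ‖f (circleMap 0 x y)‖ := by
      rw [← mul_div_assoc, div_le_iff₀ (by linarith)]
      nlinarith [norm_nonneg (f (circleMap 0 x y))]
    linarith
  have hint : Continuous (fun y => 2 * (d + d ^ (1 - r) * ‖f (circleMap 0 x y)‖ ^ r)) := by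
    fun_prop
  have := intervalIntegral.norm_integral_le_of_norm_le (μ := volume) Real.two_pi_pos.le
    (Eventually.of_forall (fun y _ => hb y)) (hint.intervalIntegrable _ _)
  have hq : Continuous (fun y => d ^ (1 - r) * ‖f (circleMap 0 x y)‖ ^ r) :=
    continuous_const.mul hpc
  refine (this.trans_eq ?_)
  rw [intervalIntegral.integral_const_mul, intervalIntegral.integral_add
    (by simp) (hq.intervalIntegrable _ _),
    intervalIntegral.integral_const_mul]
  simp

lemma aux_freq (R₀ : ℝ) (hR₀ : 0 < R₀) (r : ℝ) (hr : 1 ≤ r)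
    (f : ℂ → ℂ)
    (hcont : ContinuousOn f {ζ : ℂ | R₀ ≤ ‖ζ‖})
    (hint : IntegrableOn (fun ζ => ‖f ζ‖ ^ r) {ζ : ℂ | R₀ ≤ ‖ζ‖} volume)
    (z : ℂ) (e : ℝ) (he : 0 < e) (M : ℝ) :
    ∃ x, M < x ∧ ‖circleIntegral (fun ζ => f ζ / (ζ - z)) 0 x‖ < e := by
  by_contra! hcon
  set E : Set ℂ := {ζ : ℂ | R₀ ≤ ‖ζ‖} with hE
  have hEm : MeasurableSet E := (isClosed_le continuous_const continuous_norm).measurableSet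
  obtain ⟨K, hK1, hKM, hKR, hKz⟩ : ∃ K : ℝ, 1 ≤ K ∧ M ≤ K ∧ R₀ ≤ K ∧ 2 * ‖z‖ ≤ K :=
    ⟨max (max 1 M) (max R₀ (2 * ‖z‖)), by simp, by simp, by simp, by simp⟩
  set d : ℝ := e / (8 * Real.pi) with hdd
  have hd : 0 < d := by positivity
  have hD : 0 < d ^ (1 - r) := Real.rpow_pos_of_pos hd _
  set c : ℝ := e / (4 * d ^ (1 - r)) with hc
  have hcpos : 0 < c := by positivity
  have hlow : ∀ x, K < x → c ≤ ∫ y in (-Real.pi)..Real.pi, ‖f (circleMap 0 x y)‖ ^ r := by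
    intro x hx
    have h1 := aux_circle R₀ r hr f hcont z x (by linarith) (by linarith) (by linarith) d hd
    have h2 := hcon x (by linarith)
    have h3 : 2 * Real.pi * d = e / 4 := by
      rw [hdd]; field_simp; norm_num
    rw [hc, div_le_iff₀ (by positivity)]
    rw [h3] at h1
    linarith
  classical
  set G : ℂ → ℝ := E.piecewise (fun ζ => ‖f ζ‖ ^ r) (fun _ => 0) with hG
  have hGm : Measurable G :=
    ContinuousOn.measurable_piecewise
      (hcont.norm.rpow_const (fun _ _ => Or.inr (by linarith))) continuousOn_const hEm
  set F : ℂ → ENNReal := fun ζ => ENNReal.ofReal (G ζ) with hF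
  have hFm : Measurable F := hGm.ennreal_ofReal
  have hfin : ∫⁻ ζ, F ζ < ⊤ := by
    have hGi : Integrable G := by
      have : G = E.indicator (fun ζ => ‖f ζ‖ ^ r) := by
        rw [hG]; exact Set.piecewise_eq_indicator
      rw [this, integrable_indicator_iff hEm]
      exact hint
    exact hGi.lintegral_lt_top
  have hsymm : ∀ x y : ℝ, Complex.polarCoord.symm (x, y) = circleMap 0 x y := by
    intro x y
    rw [Complex.polarCoord_symm_apply]
    simp [circleMap, Complex.exp_mul_I]
  have hpm : Measurable (fun p : ℝ × ℝ => Complex.polarCoord.symm p) := by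
    have : (fun p : ℝ × ℝ => Complex.polarCoord.symm p) =
      fun p : ℝ × ℝ => (p.1 : ℂ) * ((Real.cos p.2 : ℂ) + (Real.sin p.2 : ℂ) * I) := by
      ext p
      rw [Complex.polarCoord_symm_apply]
    rw [this]
    fun_prop
  rw [← Complex.lintegral_comp_polarCoord_symm] at hfin
  rw [show polarCoord.target = Set.Ioi (0 : ℝ) ×ˢ Set.Ioo (-Real.pi) Real.pi from rfl, Measure.volume_eq_prod, ← Measure.prod_restrict,
    lintegral_prod _ (by
      apply Measurable.aemeasurable
      exact (measurable_fst.ennreal_ofReal).smul (hFm.comp hpm))] at hfin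
  have htop : ∫⁻ x in Set.Ioi K, ENNReal.ofReal c = ⊤ := by
    simp [hcpos]
  have hle : ∫⁻ x in Set.Ioi K, ENNReal.ofReal c ≤ ∫⁻ x in Set.Ioi 0,
      ∫⁻ y in Set.Ioo (-Real.pi) Real.pi,
        ENNReal.ofReal (x, y).1 • F (Complex.polarCoord.symm (x, y)) := by
    refine le_trans ?_ (lintegral_mono_set (Set.Ioi_subset_Ioi (by linarith : (0 : ℝ) ≤ K)))
    refine setLIntegral_mono' measurableSet_Ioi ?_
    intro x hx
    have hx : K < x := hx
    have hx0 : 0 < x := by linarith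
    have hfc : Continuous (fun y => f (circleMap 0 x y)) :=
      hcont.comp_continuous (continuous_circleMap 0 x)
        (fun y => by simp [hE, abs_of_pos hx0]; linarith)
    have hpc : Continuous (fun y => ‖f (circleMap 0 x y)‖ ^ r) :=
      hfc.norm.rpow_const (fun _ => Or.inr (by linarith))
    have h1 : ∀ y, ENNReal.ofReal (‖f (circleMap 0 x y)‖ ^ r) ≤
        ENNReal.ofReal (x, y).1 • F (Complex.polarCoord.symm (x, y)) := by
      intro y
      have hm : circleMap 0 x y ∈ E := by
        simp [hE, abs_of_pos hx0]; linarith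
      rw [hsymm, hF, smul_eq_mul, ← ENNReal.ofReal_mul hx0.le, hG,
        Set.piecewise_eq_of_mem _ _ _ hm]
      apply ENNReal.ofReal_le_ofReal
      have : 0 ≤ ‖f (circleMap 0 x y)‖ ^ r := by positivity
      show _ ≤ x * _
      nlinarith
    refine le_trans ?_ (lintegral_mono h1)
    rw [← ofReal_integral_eq_lintegral_ofReal]
    · apply ENNReal.ofReal_le_ofReal
      rw [← integral_Ioc_eq_integral_Ioo, ← intervalIntegral.integral_of_le
        (by linarith [Real.pi_pos])]
      exact hlow x hx
    · exact (hpc.integrableOn_Icc (a := -Real.pi) (b := Real.pi)).mono_set Set.Ioo_subset_Icc_self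
    · exact Eventually.of_forall (fun y => by positivity)
  rw [htop] at hle
  exact absurd hfin (not_lt.mpr hle)




/-- For `f` continuous and of class `L^r` on the region `{|ζ| ≥ R₀}` and any fixed
`z ∈ ℂ`, the Cauchy-kernel contour integrals `∮_{|ζ|=R} f(ζ)/(ζ−z) dζ` vanish
along a sequence of increasing radii tending to infinity. -/
theorem circle_integrals_vanish_along_sequence
    (R₀ : ℝ) (hR₀ : 0 < R₀) (r : ℝ) (hr : 1 ≤ r)
    (f : ℂ → ℂ)
    (hcont : ContinuousOn f {ζ : ℂ | R₀ ≤ ‖ζ‖})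
    (hint : IntegrableOn (fun ζ => ‖f ζ‖ ^ r) {ζ : ℂ | R₀ ≤ ‖ζ‖} volume)
    (z : ℂ) :
    ∃ R : ℕ → ℝ, StrictMono R ∧ (∀ n, R₀ ≤ R n ∧ ‖z‖ < R n) ∧
      Tendsto R atTop atTop ∧
      Tendsto (fun n => circleIntegral (fun ζ => f ζ / (ζ - z)) 0 (R n))
        atTop (nhds 0) := by
  have key : ∀ n : ℕ, ∃ x : ℝ, max (n : ℝ) (max R₀ ‖z‖) < x ∧
      ‖circleIntegral (fun ζ => f ζ / (ζ - z)) 0 x‖ < 1 / ((n : ℝ) + 1) :=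
    fun n => aux_freq R₀ hR₀ r hr f hcont hint z _ (by positivity) _
  choose S hS1 hS2 using key
  have hSt : Tendsto S atTop atTop :=
    tendsto_atTop_mono (fun n => (le_max_left _ _).trans (hS1 n).le) tendsto_natCast_atTop_atTop
  obtain ⟨φ, hφ, hSφ⟩ := strictMono_subseq_of_tendsto_atTop hSt
  refine ⟨S ∘ φ, hSφ, fun n => ⟨?_, ?_⟩, hSt.comp hφ.tendsto_atTop, ?_⟩
  · exact ((le_max_left _ _).trans (le_max_right _ _)).trans (hS1 (φ n)).le
  · exact ((le_max_right _ _).trans (le_max_right _ _)).trans_lt (hS1 (φ n))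
  · have h0 : Tendsto (fun n => circleIntegral (fun ζ => f ζ / (ζ - z)) 0 (S n))
        atTop (nhds 0) :=
      squeeze_zero_norm (fun n => (hS2 n).le) tendsto_one_div_add_atTop_nhds_zero_nat
    exact h0.comp hφ.tendsto_atTop
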